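/- arXiv:1903.02385 — 2 statements merged into one kernel-verified Lean document; each statement's English description precedes it below -/
import Mathlib

section
/- Let G(v) = ∫₀^v g(t) dt − B·v²/2 for v ≥ 0. Then G(0) = 0, the (right) derivative of G at 0 is 0, and there exists a₀ > 0 such that G is strictly decreasing on (0, a₀), strictly increasing on (a₀, ∞), and G(v) → ∞ as v → ∞. -/
open Real Filter Set

noncomputable section

/-- Conditions (G) on the nonlinearity `g`, extended to `[0,∞)` by `g 0 = 0`. -/
def CondG (n : ℕ) (g : ℝ → ℝ) : Prop :=
  ContDiffOn ℝ 1 g (Set.Ioi 0) ∧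
  (∀ t > 0, 0 < g t) ∧
  Filter.Tendsto g (nhdsWithin 0 (Set.Ioi 0)) (nhds 0) ∧
  (∀ t > 0, g t / t < deriv g t ∧ deriv g t ≤ (((n : ℝ) + 4) / ((n : ℝ) - 4)) * (g t / t)) ∧
  (∃ β : ℝ, 0 ≤ β ∧ β < (n : ℝ) ^ 2 * ((n : ℝ) - 4) ^ 2 / 16 ∧
    Filter.Tendsto (deriv g) (nhdsWithin 0 (Set.Ioi 0)) (nhds β)) ∧
  (∃ q c : ℝ, 1 < q ∧ 0 < c ∧ ∀ t ≥ 1, c * t ^ q ≤ g t) ∧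
  g 0 = 0

/-- `v` solves the ODE `v'''' - A v'' + B v = g(v)` on all of `ℝ`. -/
def IsSol (A B : ℝ) (g v : ℝ → ℝ) : Prop :=
  ∀ t : ℝ, iteratedDeriv 4 v t - A * iteratedDeriv 2 v t + B * v t = g (v t)

/-!
The derivative of `G` at `v > 0` is `g v - B v = v (g v / v - B)`. The inequality `g t / t < g' t`
says that `t ↦ g t / t` is strictly increasing; near `0` it lies below `B` because `g'` has a limit
smaller than `B` there, and it is unbounded because `g` is superlinear. Hence `G'` changes sign
exactly once, from negative to positive, and past its zero it is a product of two increasing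
positive factors, so it stays bounded away from `0` and `G` is unbounded.
-/

section Calculus

theorem continuousOn_Ici_of_continuousOn_Ioi {α β : Type*} [TopologicalSpace α] [LinearOrder α]
    [OrderTopology α] [TopologicalSpace β] {f : α → β} {a : α} (hf : ContinuousOn f (Ioi a))
    (ha : Tendsto f (nhdsWithin a (Ioi a)) (nhds (f a))) : ContinuousOn f (Ici a) := by
  intro x hx
  rcases eq_or_lt_of_le (mem_Ici.1 hx) with rfl | hax
  · exact continuousWithinAt_Ioi_iff_Ici.1 ha
  · exact (hf.continuousAt (Ioi_mem_nhds hax)).continuousWithinAt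

theorem hasDerivWithinAt_integral_of_continuousOn_Ici {E : Type*} [NormedAddCommGroup E]
    [NormedSpace ℝ E] [CompleteSpace E] {f : ℝ → E} {a x : ℝ} (hf : ContinuousOn f (Ici a))
    (hx : a ≤ x) : HasDerivWithinAt (fun v => ∫ t in a..v, f t) (f x) (Ici a) x := by
  have hf' : ContinuousOn f (Ioi a) := hf.mono Ioi_subset_Ici_self
  rcases hx.eq_or_lt with rfl | hax
  · exact intervalIntegral.integral_hasDerivWithinAt_right .refl
      (hf'.stronglyMeasurableAtFilter_nhdsWithin measurableSet_Ioi a)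
      ((hf a self_mem_Ici).mono Ioi_subset_Ici_self)
  · have hint : IntervalIntegrable f MeasureTheory.volume a x :=
      (hf.mono Icc_subset_Ici_self).intervalIntegrable_of_Icc hx
    exact (intervalIntegral.integral_hasDerivAt_right hint
      (hf'.stronglyMeasurableAtFilter isOpen_Ioi x hax)
      (hf'.continuousAt (Ioi_mem_nhds hax))).hasDerivWithinAt

theorem tendsto_atTop_atTop_of_le_deriv {F : ℝ → ℝ} {T m : ℝ} (hm : 0 < m)
    (hcont : ContinuousOn F (Ici T)) (hdiff : DifferentiableOn ℝ F (Ioi T))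
    (hderiv : ∀ x ∈ Ioi T, m ≤ deriv F x) : Tendsto F atTop atTop := by
  have hline : Tendsto (fun v => F T + m * (v - T)) atTop atTop :=
    tendsto_atTop_add_const_left _ _
      ((tendsto_atTop_add_const_right _ (-T) tendsto_id).const_mul_atTop hm)
  refine tendsto_atTop_mono' _ ?_ hline
  filter_upwards [eventually_ge_atTop T] with v hv
  rw [← interior_Ici] at hdiff hderiv
  linarith [(convex_Ici T).mul_sub_le_image_sub_of_le_deriv hcont hdiff hderiv
    T self_mem_Ici v hv hv]

end Calculus

section Quotient

variable {g : ℝ → ℝ}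

theorem strictMonoOn_div_id_of_div_lt_deriv (hdiff : DifferentiableOn ℝ g (Ioi 0))
    (hlt : ∀ t > 0, g t / t < deriv g t) : StrictMonoOn (fun t => g t / t) (Ioi 0) := by
  have hderiv : ∀ t > 0,
      HasDerivAt (fun t => g t / t) ((deriv g t * t - g t * 1) / t ^ 2) t := fun t ht =>
    ((hdiff.differentiableAt (Ioi_mem_nhds ht)).hasDerivAt).div (hasDerivAt_id t) ht.ne'
  refine strictMonoOn_of_deriv_pos (convex_Ioi 0)
    (fun t ht => (hderiv t ht).continuousAt.continuousWithinAt) fun t ht => ?_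
  rw [interior_Ioi] at ht
  have hnum : g t < deriv g t * t := (div_lt_iff₀ ht).1 (hlt t ht)
  rw [(hderiv t ht).deriv, mul_one]
  exact div_pos (sub_pos.2 hnum) (pow_pos ht 2)

theorem tendsto_div_id_atTop_of_rpow_le {c q : ℝ} (hc : 0 < c) (hq : 1 < q)
    (hle : ∀ᶠ t in atTop, c * t ^ q ≤ g t) : Tendsto (fun t => g t / t) atTop atTop := by
  have hpow : Tendsto (fun t : ℝ => c * t ^ (q - 1)) atTop atTop :=
    (tendsto_rpow_atTop (sub_pos.2 hq)).const_mul_atTop hc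
  refine tendsto_atTop_mono' _ ?_ hpow
  filter_upwards [hle, eventually_gt_atTop 0] with t hgt ht
  rwa [rpow_sub_one ht.ne', ← mul_div_assoc, div_le_div_iff_of_pos_right ht]

theorem exists_sign_change_of_strictMonoOn_div_id {B : ℝ} (hcont : ContinuousOn g (Ioi 0))
    (hmono : StrictMonoOn (fun t => g t / t) (Ioi 0)) (hbelow : ∃ s > 0, g s / s < B)
    (habove : ∃ T > 0, B < g T / T) :
    ∃ a > 0, (∀ v ∈ Ioo 0 a, g v - B * v < 0) ∧ g a - B * a = 0 ∧
      StrictMonoOn (fun v => g v - B * v) (Ici a) := by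
  obtain ⟨s, hs, hsB⟩ := hbelow
  obtain ⟨T, hT, hTB⟩ := habove
  obtain ⟨a, ha, haB⟩ : ∃ a ∈ Ioi (0 : ℝ), g a / a = B :=
    isPreconnected_Ioi.intermediate_value hs hT
      (hcont.div continuousOn_id fun _ hx => ne_of_gt hx) ⟨hsB.le, hTB.le⟩
  have hfactor : ∀ v > 0, g v - B * v = v * (g v / v - B) := fun v hv => by
    rw [mul_sub, mul_div_cancel₀ _ hv.ne', mul_comm]
  refine ⟨a, ha, fun v hv => ?_, by rw [hfactor a ha, haB, sub_self, mul_zero],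
    fun x hx y _ hxy => ?_⟩
  · rw [hfactor v hv.1]
    exact mul_neg_of_pos_of_neg hv.1 (sub_neg.2 (haB ▸ hmono hv.1 ha hv.2))
  · have hx₀ : 0 < x := ha.trans_le hx
    have hy₀ : 0 < y := hx₀.trans hxy
    have hquot : g x / x < g y / y := hmono hx₀ hy₀ hxy
    have hBx : B ≤ g x / x := haB ▸ hmono.monotoneOn ha hx₀ hx
    simp only [hfactor x hx₀, hfactor y hy₀]
    exact mul_lt_mul'' hxy (by linarith) hx₀.le (sub_nonneg.2 hBx)

end Quotient

namespace CondG

variable {n : ℕ} {g : ℝ → ℝ}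

theorem differentiableOn (hg : CondG n g) : DifferentiableOn ℝ g (Ioi 0) :=
  hg.1.differentiableOn one_ne_zero

theorem map_zero (hg : CondG n g) : g 0 = 0 :=
  hg.2.2.2.2.2.2

theorem continuousOn (hg : CondG n g) : ContinuousOn g (Ici 0) :=
  continuousOn_Ici_of_continuousOn_Ioi hg.1.continuousOn (hg.map_zero.symm ▸ hg.2.2.1)

theorem div_lt_deriv (hg : CondG n g) : ∀ t > 0, g t / t < deriv g t :=
  fun t ht => (hg.2.2.2.1 t ht).1

theorem strictMonoOn_div_id (hg : CondG n g) : StrictMonoOn (fun t => g t / t) (Ioi 0) :=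
  strictMonoOn_div_id_of_div_lt_deriv hg.differentiableOn hg.div_lt_deriv

theorem exists_div_lt (hg : CondG n g) :
    ∃ s > 0, g s / s < (n : ℝ) ^ 2 * ((n : ℝ) - 4) ^ 2 / 16 := by
  obtain ⟨β, -, hβ, hlim⟩ := hg.2.2.2.2.1
  obtain ⟨s, hsB, hs⟩ := ((hlim.eventually_lt_const hβ).and self_mem_nhdsWithin).exists
  exact ⟨s, hs, (hg.div_lt_deriv s hs).trans hsB⟩

theorem exists_lt_div (hg : CondG n g) (B : ℝ) : ∃ T > 0, B < g T / T := by
  obtain ⟨q, c, hq, hc, hle⟩ := hg.2.2.2.2.2.1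
  have hlim : Tendsto (fun t => g t / t) atTop atTop :=
    tendsto_div_id_atTop_of_rpow_le hc hq ((eventually_ge_atTop 1).mono hle)
  exact ((eventually_gt_atTop 0).and (hlim.eventually_gt_atTop B)).exists

end CondG

theorem hasDerivWithinAt_integral_sub_sq {g G : ℝ → ℝ} {B : ℝ} (hcont : ContinuousOn g (Ici 0))
    (hG : ∀ v ≥ 0, G v = (∫ t in (0 : ℝ)..v, g t) - B * v ^ 2 / 2) {v : ℝ} (hv : 0 ≤ v) :
    HasDerivWithinAt G (g v - B * v) (Ici 0) v := by
  have hsq : HasDerivAt (fun v : ℝ => B * v ^ 2 / 2) (B * v) v :=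
    (((hasDerivAt_pow 2 v).const_mul B).div_const 2).congr_deriv (by norm_num; ring)
  exact ((hasDerivWithinAt_integral_of_continuousOn_Ici hcont hv).sub
    hsq.hasDerivWithinAt).congr hG (hG v hv)

theorem stmt_0_general {g G : ℝ → ℝ} {B : ℝ} (hcont : ContinuousOn g (Ici 0)) (hg₀ : g 0 = 0)
    (hmono : StrictMonoOn (fun t => g t / t) (Ioi 0)) (hbelow : ∃ s > 0, g s / s < B)
    (habove : ∃ T > 0, B < g T / T)
    (hG : ∀ v ≥ 0, G v = (∫ t in (0 : ℝ)..v, g t) - B * v ^ 2 / 2) :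
    G 0 = 0 ∧ HasDerivWithinAt G 0 (Ici 0) 0 ∧
    ∃ a₀ : ℝ, 0 < a₀ ∧ StrictAntiOn G (Ioo 0 a₀) ∧ StrictMonoOn G (Ioi a₀) ∧
      Tendsto G atTop atTop := by
  have hderivWithin : ∀ v ≥ 0, HasDerivWithinAt G (g v - B * v) (Ici 0) v := fun v hv =>
    hasDerivWithinAt_integral_sub_sq hcont hG hv
  have hderiv : ∀ v > 0, HasDerivAt G (g v - B * v) v := fun v hv =>
    (hderivWithin v hv.le).hasDerivAt (Ici_mem_nhds hv)
  have hGcont : ContinuousOn G (Ioi 0) := fun v hv => (hderiv v hv).continuousAt.continuousWithinAt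
  obtain ⟨a, ha, hneg, hzero, hincr⟩ := exists_sign_change_of_strictMonoOn_div_id
    (hcont.mono Ioi_subset_Ici_self) hmono hbelow habove
  have hpos : ∀ v > a, 0 < g v - B * v := fun v hv =>
    hzero.symm.trans_lt (hincr self_mem_Ici hv.le hv)
  refine ⟨by simp [hG], by simpa [hg₀] using hderivWithin 0 le_rfl, a, ha, ?_, ?_, ?_⟩
  · refine strictAntiOn_of_deriv_neg (convex_Ioo 0 a) (hGcont.mono Ioo_subset_Ioi_self) ?_
    rw [interior_Ioo]
    exact fun v hv => (hderiv v hv.1).deriv ▸ hneg v hv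
  · refine strictMonoOn_of_deriv_pos (convex_Ioi a) (hGcont.mono (Ioi_subset_Ioi ha.le)) ?_
    rw [interior_Ioi]
    exact fun v hv => (hderiv v (ha.trans hv)).deriv ▸ hpos v hv
  · have haT : a < a + 1 := lt_add_one a
    have hT : 0 < a + 1 := ha.trans haT
    exact tendsto_atTop_atTop_of_le_deriv (hpos (a + 1) haT)
      (hGcont.mono (Ici_subset_Ioi.2 hT))
      (fun v hv => (hderiv v (hT.trans hv)).differentiableAt.differentiableWithinAt)
      fun v hv => (hderiv v (hT.trans hv)).deriv ▸
        (hincr haT.le (haT.trans hv).le hv).le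

theorem stmt_0 (n : ℕ) (hn : 5 ≤ n) (g : ℝ → ℝ) (hg : CondG n g)
    (B : ℝ) (hB : B = (n : ℝ) ^ 2 * ((n : ℝ) - 4) ^ 2 / 16)
    (G : ℝ → ℝ) (hG : ∀ v : ℝ, G v = (∫ t in (0:ℝ)..v, g t) - B * v ^ 2 / 2) :
    G 0 = 0 ∧ HasDerivWithinAt G 0 (Set.Ici (0 : ℝ)) 0 ∧
    ∃ a₀ : ℝ, 0 < a₀ ∧ StrictAntiOn G (Set.Ioo 0 a₀) ∧ StrictMonoOn G (Set.Ioi a₀) ∧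
      Filter.Tendsto G Filter.atTop Filter.atTop :=
  stmt_0_general hg.continuousOn hg.map_zero hg.strictMonoOn_div_id (hB ▸ hg.exists_div_lt)
    (hg.exists_lt_div B) fun v _ => hG v
end
end

section
/- For every a ∈ (0, a₀) there exist a C⁴ positive solution v : ℝ → ℝ of the ODE v''''(t) − A·v''(t) + B·v(t) = g(v(t)) and a number L > 0 such that: v(t + L) = v(t) for all t ∈ ℝ; v(−t) = v(t) for all t ∈ ℝ; v(0) = max_{t ∈ ℝ} v(t); v(L/2) = min_{t ∈ ℝ} v(t) = a; and v is strictly decreasing on the interval [0, L/2]. In particular, inf_{ℝ} v = a and v is bounded. -/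
open Real Filter Set

noncomputable section

/-!
Factor `d⁴/dt⁴ - A d²/dt² + B = (d²/dt² - α) (d²/dt² - γ)` with `α, γ > 0` and shoot from a minimum:
start at `v(0) = a`, `v'(0) = v'''(0) = 0`, with `s = v''(0) - γ a` as parameter. Once `g` has been
truncated to a monotone Lipschitz function, the factored first-order system is cooperative, so `v'`
is nondecreasing in `s`. Hence `v` never turns when `s ≥ 0`, and the first zero `T` of `v'` is
nondecreasing on the set of `s > -γ a` for which it exists and `v'''(T) < 0`. This set is nonempty,
since `v` turns early when `s + γ a > 0` is small, and it has no maximum. At its supremum `T` stays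
finite, because `v` can neither increase forever below `a₀` nor stay bounded above it, while energy
conservation bounds `v(T)`. In the limit `v'(T) = v'''(T) = 0`, so `v` is symmetric about both `0`
and `T`.
-/

open MeasureTheory Topology
open scoped NNReal BoundedContinuousFunction

/-! ### One-variable calculus -/

section Calculus

variable {f f' : ℝ → ℝ} (hf : ∀ t, HasDerivAt f (f' t) t)
include hf

lemma continuous_of_hasDerivAt : Continuous f :=
  continuous_iff_continuousAt.2 fun t => (hf t).continuousAt

lemma contDiff_add_one_of_hasDerivAt {n : ℕ} (hf' : ContDiff ℝ n f') : ContDiff ℝ (n + 1) f := by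
  refine contDiff_succ_iff_deriv.2 ⟨fun t => (hf t).differentiableAt, by simp, ?_⟩
  rwa [funext fun t => (hf t).deriv]

lemma monotoneOn_of_hasDerivAt_nonneg {D : Set ℝ} (hD : Convex ℝ D)
    (hf' : ∀ t ∈ interior D, 0 ≤ f' t) : MonotoneOn f D :=
  monotoneOn_of_deriv_nonneg hD (continuous_of_hasDerivAt hf).continuousOn
    (fun t _ => (hf t).differentiableAt.differentiableWithinAt)
    fun t ht => (hf t).deriv.symm ▸ hf' t ht

lemma strictMonoOn_of_hasDerivAt_pos {D : Set ℝ} (hD : Convex ℝ D)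
    (hf' : ∀ t ∈ interior D, 0 < f' t) : StrictMonoOn f D :=
  strictMonoOn_of_deriv_pos hD (continuous_of_hasDerivAt hf).continuousOn
    fun t ht => (hf t).deriv.symm ▸ hf' t ht

lemma eventually_nhdsGT_lt_of_deriv_pos {x : ℝ} (hf' : ∀ᶠ t in 𝓝[>] x, 0 < f' t) :
    ∀ᶠ t in 𝓝[>] x, f x < f t := by
  obtain ⟨u, hxu, hu⟩ := mem_nhdsGT_iff_exists_Ioo_subset.1 hf'
  have hmono := strictMonoOn_of_hasDerivAt_pos hf (convex_Icc x u) (by rwa [interior_Icc])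
  filter_upwards [Ioo_mem_nhdsGT hxu] with t ht
  exact hmono ⟨le_rfl, hxu.le⟩ (Ioo_subset_Icc_self ht) ht.1

lemma eventually_nhdsLT_lt_of_deriv_pos {x : ℝ} (hf' : ∀ᶠ t in 𝓝[<] x, 0 < f' t) :
    ∀ᶠ t in 𝓝[<] x, f t < f x := by
  obtain ⟨u, hux, hu⟩ := mem_nhdsLT_iff_exists_Ioo_subset.1 hf'
  have hmono := strictMonoOn_of_hasDerivAt_pos hf (convex_Icc u x) (by rwa [interior_Icc])
  filter_upwards [Ioo_mem_nhdsLT hux] with t ht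
  exact hmono (Ioo_subset_Icc_self ht) ⟨hux.le, le_rfl⟩ ht.2

lemma eventually_nhdsGT_lt_of_deriv_neg {x : ℝ} (hf' : ∀ᶠ t in 𝓝[>] x, f' t < 0) :
    ∀ᶠ t in 𝓝[>] x, f t < f x := by
  simpa using eventually_nhdsGT_lt_of_deriv_pos (fun t => (hf t).neg) (x := x) (by simpa using hf')

lemma eventually_nhdsLT_lt_of_deriv_neg {x : ℝ} (hf' : ∀ᶠ t in 𝓝[<] x, f' t < 0) :
    ∀ᶠ t in 𝓝[<] x, f x < f t := by
  simpa using eventually_nhdsLT_lt_of_deriv_pos (fun t => (hf t).neg) (x := x) (by simpa using hf')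

lemma tendsto_atTop_of_le_deriv {c : ℝ} (hc : 0 < c) (hf' : ∀ᶠ t in atTop, c ≤ f' t) :
    Tendsto f atTop atTop := by
  obtain ⟨t₀, ht₀⟩ := eventually_atTop.1 hf'
  have hlinear : Tendsto (fun t => f t₀ + c * (t - t₀)) atTop atTop :=
    tendsto_atTop_add_const_left _ _
      ((tendsto_atTop_add_const_right _ (-t₀) tendsto_id).const_mul_atTop hc)
  refine tendsto_atTop_mono' _ (eventually_atTop.2 ⟨t₀, fun t ht => ?_⟩) hlinear
  have hmvt := (convex_Icc t₀ t).mul_sub_le_image_sub_of_le_deriv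
    (continuous_of_hasDerivAt hf).continuousOn
    (fun s _ => (hf s).differentiableAt.differentiableWithinAt)
    (fun s hs => (hf s).deriv.symm ▸ ht₀ s (interior_subset hs).1)
    t₀ ⟨le_rfl, ht⟩ t ⟨ht, le_rfl⟩ ht
  linarith

lemma tendsto_atBot_of_deriv_le {c : ℝ} (hc : c < 0) (hf' : ∀ᶠ t in atTop, f' t ≤ c) :
    Tendsto f atTop atBot :=
  tendsto_neg_atTop_iff.1 <| tendsto_atTop_of_le_deriv (fun t => (hf t).fun_neg) (neg_pos.2 hc)
    (hf'.mono fun _ ht => neg_le_neg ht)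

lemma deriv_neg_of_pos_left_of_deriv_deriv_neg {f'' : ℝ → ℝ}
    (hf' : ∀ t, HasDerivAt f' (f'' t) t) {x : ℝ} (hpos : ∀ᶠ t in 𝓝[<] x, f x < f t)
    (hneg : ∀ᶠ t in 𝓝[<] x, f'' t < 0) : f' x < 0 := by
  by_contra! h0
  have hf'pos : ∀ᶠ t in 𝓝[<] x, 0 < f' t :=
    (eventually_nhdsLT_lt_of_deriv_neg hf' hneg).mono fun t ht => h0.trans_lt ht
  obtain ⟨t, hlt, hgt⟩ := ((eventually_nhdsLT_lt_of_deriv_pos hf hf'pos).and hpos).exists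
  exact hlt.not_gt hgt

end Calculus

section ReflectionSymmetry

variable {v : ℝ → ℝ} {T : ℝ} (hzero : ∀ t, v (-t) = v t) (hT : ∀ t, v (2 * T - t) = v t)
include hzero hT

lemma periodic_of_two_reflections : Function.Periodic v (2 * T) := fun t => by
  rw [← hzero t, ← hT (-t)]
  congr 1
  ring

lemma image_mem_Icc_of_antitoneOn (hT0 : 0 < T) (hanti : AntitoneOn v (Icc 0 T)) (t : ℝ) :
    v t ∈ Icc (v T) (v 0) := by
  obtain ⟨y, hy, hty⟩ :=
    (periodic_of_two_reflections hzero hT).exists_mem_Ico (by positivity) t (-T)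
  have habs : v y = v |y| := by
    rcases abs_choice y with h | h <;> rw [h]
    rw [hzero]
  have hmem : |y| ∈ Icc 0 T := ⟨abs_nonneg _, abs_le.2 ⟨hy.1, by linarith [hy.2]⟩⟩
  rw [hty, habs]
  exact ⟨hanti hmem ⟨hT0.le, le_rfl⟩ hmem.2, hanti ⟨le_rfl, hT0.le⟩ hmem hmem.1⟩

end ReflectionSymmetry

/-! ### First positive zeros -/

/-- `T > 0` is the first zero after time `0` of a function that is positive just after `0`. -/
structure IsFirstZero (p : ℝ → ℝ) (T : ℝ) : Prop where
  pos : 0 < T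
  pos_of_mem : ∀ t ∈ Ioo 0 T, 0 < p t
  eq_zero : p T = 0

namespace IsFirstZero

lemma exists_of_pos_of_neg {p : ℝ → ℝ} (hp : Continuous p) (hpos : ∀ᶠ t in 𝓝[>] 0, 0 < p t)
    {τ : ℝ} (hτ : 0 < τ) (hneg : p τ < 0) : ∃ T < τ, IsFirstZero p T := by
  obtain ⟨ε, hε, hε'⟩ := mem_nhdsGT_iff_exists_Ioo_subset.1 hpos
  have hετ : ε ≤ τ := not_lt.1 fun h => hneg.not_gt (hε' ⟨hτ, h⟩)
  set C : Set ℝ := Icc ε τ ∩ p ⁻¹' Iic 0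
  have hC : IsClosed C := isClosed_Icc.inter (isClosed_Iic.preimage hp)
  have hbdd : BddBelow C := ⟨ε, fun t ht => ht.1.1⟩
  obtain ⟨⟨hεT, hTτ⟩, hpT⟩ : sInf C ∈ C := hC.csInf_mem ⟨τ, ⟨hετ, le_rfl⟩, hneg.le⟩ hbdd
  have hT : 0 < sInf C := lt_of_lt_of_le hε hεT
  have hbefore : ∀ t ∈ Ioo 0 (sInf C), 0 < p t := by
    intro t ht
    by_contra! hpt
    have hεt : ε ≤ t := not_lt.1 fun h => hpt.not_gt (hε' ⟨ht.1, h⟩)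
    exact (csInf_le hbdd ⟨⟨hεt, ht.2.le.trans hTτ⟩, hpt⟩).not_gt ht.2
  have hzero : p (sInf C) = 0 := le_antisymm hpT <|
    ge_of_tendsto (hp.continuousAt.tendsto.mono_left nhdsWithin_le_nhds) <|
      (eventually_of_mem (Ioo_mem_nhdsLT hT) hbefore).mono fun t ht => ht.le
  exact ⟨_, hTτ.lt_of_ne fun h => (h ▸ hneg).ne hzero, hT, hbefore, hzero⟩

lemma le_of_le {p p' : ℝ → ℝ} {T T' : ℝ} (hT : IsFirstZero p T) (hT' : IsFirstZero p' T')
    (hle : ∀ t, 0 ≤ t → p t ≤ p' t) : T ≤ T' := by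
  by_contra! hlt
  exact ((hT.pos_of_mem T' ⟨hT'.pos, hlt⟩).trans_le (hle T' hT'.pos.le)).ne' hT'.eq_zero

lemma of_tendsto {ι : Type*} {l : Filter ι} [l.NeBot] {p : ℝ → ℝ → ℝ}
    (hp : Continuous fun q : ℝ × ℝ => p q.1 q.2) (hmono : ∀ t, 0 ≤ t → Monotone fun s => p s t)
    {u τ : ι → ℝ} {σ T : ℝ} (hu : Tendsto u l (𝓝 σ)) (hτ : Tendsto τ l (𝓝 T))
    (huσ : ∀ i, u i ≤ σ) (hτT : ∀ i, τ i ≤ T) (hzero : ∀ i, IsFirstZero (p (u i)) (τ i)) :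
    IsFirstZero (p σ) T where
  pos := have ⟨i⟩ := l.nonempty_of_neBot; (hzero i).pos.trans_le (hτT i)
  pos_of_mem t ht :=
    have ⟨i, hi⟩ := (hτ.eventually_const_lt ht.2).exists
    ((hzero i).pos_of_mem t ⟨ht.1, hi⟩).trans_le (hmono t ht.1.le (huσ i))
  eq_zero := tendsto_nhds_unique
    ((hp.tendsto (σ, T)).comp (hu.prodMk_nhds hτ))
    (tendsto_const_nhds.congr fun i => (hzero i).eq_zero.symm)

end IsFirstZero

/-! ### Global flows of Lipschitz vector fields -/

section GlobalFlow

/-- The weight of the norm `sup ‖u t‖ / coshWeight K t` in which the Picard operator of a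
`K`-Lipschitz vector field is contracting on all of `ℝ` at once. -/
def coshWeight (K : ℝ≥0) (t : ℝ) : ℝ := cosh ((2 * K + 1) * t)

variable {K : ℝ≥0}

lemma coshWeight_pos (t : ℝ) : 0 < coshWeight K t := cosh_pos _

lemma one_le_coshWeight (t : ℝ) : 1 ≤ coshWeight K t := one_le_cosh _

lemma continuous_coshWeight : Continuous (coshWeight K) := by
  unfold coshWeight
  fun_prop

lemma integral_coshWeight (t : ℝ) :
    ∫ s in (0 : ℝ)..t, coshWeight K s = sinh ((2 * K + 1) * t) / (2 * K + 1) := by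
  have hK : (2 * K + 1 : ℝ) ≠ 0 := by positivity
  have hderiv (s : ℝ) :
      HasDerivAt (fun s => sinh ((2 * K + 1) * s) / (2 * K + 1)) (coshWeight K s) s := by
    have hlin : HasDerivAt (fun s : ℝ => (2 * K + 1) * s) (2 * K + 1) s := by
      simpa using (hasDerivAt_id s).const_mul (2 * K + 1 : ℝ)
    exact (hlin.sinh.div_const _).congr_deriv (mul_div_cancel_right₀ _ hK)
  rw [intervalIntegral.integral_eq_sub_of_hasDerivAt (fun s _ => hderiv s)
    (continuous_coshWeight.intervalIntegrable _ _)]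
  simp

lemma abs_integral_coshWeight_le (t : ℝ) :
    |∫ s in (0 : ℝ)..t, coshWeight K s| ≤ coshWeight K t / (2 * K + 1) := by
  rw [integral_coshWeight, abs_div, abs_of_pos (by positivity : (0 : ℝ) < 2 * K + 1), abs_sinh,
    coshWeight, ← cosh_abs]
  gcongr
  exact (sinh_lt_cosh _).le

variable {E : Type*} [NormedAddCommGroup E] [NormedSpace ℝ E]

lemma norm_integral_le_coshWeight {f : ℝ → E} {C : ℝ} (hC : 0 ≤ C)
    (hf : ∀ s, ‖f s‖ ≤ C * coshWeight K s) (t : ℝ) :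
    ‖∫ s in (0 : ℝ)..t, f s‖ ≤ C / (2 * K + 1) * coshWeight K t :=
  calc ‖∫ s in (0 : ℝ)..t, f s‖ ≤ |∫ s in (0 : ℝ)..t, C * coshWeight K s| :=
        intervalIntegral.norm_integral_le_abs_of_norm_le (Eventually.of_forall hf)
          ((continuous_coshWeight.const_mul C).intervalIntegrable _ _)
    _ = C * |∫ s in (0 : ℝ)..t, coshWeight K s| := by
        rw [intervalIntegral.integral_const_mul, abs_mul, abs_of_nonneg hC]
    _ ≤ C * (coshWeight K t / (2 * K + 1)) := by gcongr; exact abs_integral_coshWeight_le t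
    _ = C / (2 * K + 1) * coshWeight K t := by ring

lemma norm_inv_coshWeight_smul_le {t C : ℝ} {x : E} (hx : ‖x‖ ≤ C * coshWeight K t) :
    ‖(coshWeight K t)⁻¹ • x‖ ≤ C := by
  rw [norm_smul, norm_inv, Real.norm_of_nonneg (coshWeight_pos t).le,
    inv_mul_le_iff₀ (coshWeight_pos t)]
  exact hx.trans_eq (mul_comm _ _)

variable {X : E → E}

lemma norm_apply_coshWeight_smul_sub_le (hX : LipschitzWith K X) (u w : ℝ →ᵇ E) (s : ℝ) :
    ‖X (coshWeight K s • u s) - X (coshWeight K s • w s)‖ ≤ K * dist u w * coshWeight K s :=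
  calc ‖X (coshWeight K s • u s) - X (coshWeight K s • w s)‖
      ≤ K * ‖coshWeight K s • u s - coshWeight K s • w s‖ := hX.norm_sub_le _ _
    _ = K * (coshWeight K s * dist (u s) (w s)) := by
        rw [← smul_sub, norm_smul, Real.norm_of_nonneg (coshWeight_pos s).le, dist_eq_norm]
    _ ≤ K * (coshWeight K s * dist u w) := by
        gcongr
        exacts [(coshWeight_pos s).le, BoundedContinuousFunction.dist_coe_le_dist s]
    _ = K * dist u w * coshWeight K s := by ring

lemma norm_apply_coshWeight_smul_le (hX : LipschitzWith K X) (u : ℝ →ᵇ E) (s : ℝ) :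
    ‖X (coshWeight K s • u s)‖ ≤ (‖X 0‖ + K * ‖u‖) * coshWeight K s := by
  have hdiff := norm_apply_coshWeight_smul_sub_le hX u 0 s
  simp only [BoundedContinuousFunction.coe_zero, Pi.zero_apply, smul_zero, dist_zero_right] at hdiff
  have hzero : ‖X 0‖ ≤ ‖X 0‖ * coshWeight K s :=
    le_mul_of_one_le_right (norm_nonneg _) (one_le_coshWeight s)
  linarith [norm_sub_norm_le (X (coshWeight K s • u s)) (X 0)]

lemma continuous_apply_coshWeight_smul (hX : LipschitzWith K X) (u : ℝ →ᵇ E) :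
    Continuous fun s => X (coshWeight K s • u s) :=
  hX.continuous.comp (continuous_coshWeight.smul u.continuous)

/-- The Picard operator `γ ↦ x + ∫₀ᵗ X (γ s) ds` of the vector field `X`, acting on curves written
as `γ = coshWeight K • u` with `u` bounded. -/
def picardMap (hX : LipschitzWith K X) (x : E) (u : ℝ →ᵇ E) : ℝ →ᵇ E :=
  BoundedContinuousFunction.ofNormedAddCommGroup
    (fun t => (coshWeight K t)⁻¹ • (x + ∫ s in (0 : ℝ)..t, X (coshWeight K s • u s)))
    ((continuous_coshWeight.inv₀ fun t => (coshWeight_pos t).ne').smul (continuous_const.add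
      (intervalIntegral.continuous_primitive
        (fun _ _ => (continuous_apply_coshWeight_smul hX u).intervalIntegrable _ _) 0)))
    (‖x‖ + (‖X 0‖ + K * ‖u‖) / (2 * K + 1))
    (fun t => norm_inv_coshWeight_smul_le <|
      calc ‖x + ∫ s in (0 : ℝ)..t, X (coshWeight K s • u s)‖
          ≤ ‖x‖ + ‖∫ s in (0 : ℝ)..t, X (coshWeight K s • u s)‖ := norm_add_le _ _
        _ ≤ ‖x‖ * coshWeight K t + (‖X 0‖ + K * ‖u‖) / (2 * K + 1) * coshWeight K t :=
            add_le_add (le_mul_of_one_le_right (norm_nonneg _) (one_le_coshWeight t))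
              (norm_integral_le_coshWeight (by positivity) (norm_apply_coshWeight_smul_le hX u) t)
        _ = _ := (add_mul _ _ _).symm)

lemma picardMap_apply (hX : LipschitzWith K X) (x : E) (u : ℝ →ᵇ E) (t : ℝ) :
    picardMap hX x u t =
      (coshWeight K t)⁻¹ • (x + ∫ s in (0 : ℝ)..t, X (coshWeight K s • u s)) := rfl

lemma contractingWith_picardMap (hX : LipschitzWith K X) (x : E) :
    ContractingWith (1 / 2) (picardMap hX x) := by
  refine ⟨by rw [← NNReal.coe_lt_coe]; norm_num, LipschitzWith.of_dist_le_mul fun u w => ?_⟩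
  have hfactor : K * dist u w / (2 * K + 1 : ℝ) ≤ 1 / 2 * dist u w := by
    rw [div_le_iff₀ (by positivity)]
    linarith [dist_nonneg (x := u) (y := w)]
  refine (BoundedContinuousFunction.dist_le (by positivity)).2 fun t => ?_
  rw [picardMap_apply, picardMap_apply, dist_eq_norm, ← smul_sub, add_sub_add_left_eq_sub,
    ← intervalIntegral.integral_sub ((continuous_apply_coshWeight_smul hX u).intervalIntegrable _ _)
      ((continuous_apply_coshWeight_smul hX w).intervalIntegrable _ _)]
  refine (norm_inv_coshWeight_smul_le (norm_integral_le_coshWeight (by positivity)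
    (norm_apply_coshWeight_smul_sub_le hX u w) t)).trans (hfactor.trans_eq ?_)
  push_cast
  rfl

lemma dist_picardMap_le (hX : LipschitzWith K X) (x y : E) (u : ℝ →ᵇ E) :
    dist (picardMap hX x u) (picardMap hX y u) ≤ dist x y := by
  refine (BoundedContinuousFunction.dist_le dist_nonneg).2 fun t => ?_
  rw [picardMap_apply, picardMap_apply, dist_eq_norm, ← smul_sub, add_sub_add_right_eq_sub]
  refine norm_inv_coshWeight_smul_le ?_
  rw [dist_eq_norm]
  exact le_mul_of_one_le_right (norm_nonneg _) (one_le_coshWeight t)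

section Order

variable [PartialOrder E] [IsOrderedAddMonoid E] [IsOrderedModule ℝ E] [OrderClosedTopology E]

lemma picardMap_le_picardMap (hX : LipschitzWith K X) (hmono : Monotone X) {x y : E} (hxy : x ≤ y)
    {u w : ℝ →ᵇ E} (huw : ∀ t, 0 ≤ t → u t ≤ w t) {t : ℝ} (ht : 0 ≤ t) :
    picardMap hX x u t ≤ picardMap hX y w t := by
  have hint (u : ℝ →ᵇ E) := ((continuous_apply_coshWeight_smul hX u).intervalIntegrable
    (μ := volume) 0 t).1
  simp only [picardMap_apply, intervalIntegral.integral_of_le ht]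
  have hmono_int := setIntegral_mono_on (hint u) (hint w) measurableSet_Ioc fun s hs =>
    hmono (smul_le_smul_of_nonneg_left (huw s hs.1.le) (coshWeight_pos s).le)
  exact smul_le_smul_of_nonneg_left (add_le_add hxy hmono_int) (inv_nonneg.2 (coshWeight_pos t).le)

end Order

variable [CompleteSpace E]

/-- The orbit of `x` under a Lipschitz vector field, divided by `coshWeight K`. -/
def weightedOrbit (hX : LipschitzWith K X) (x : E) : ℝ →ᵇ E :=
  (contractingWith_picardMap hX x).fixedPoint

lemma picardMap_weightedOrbit (hX : LipschitzWith K X) (x : E) :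
    picardMap hX x (weightedOrbit hX x) = weightedOrbit hX x :=
  (contractingWith_picardMap hX x).fixedPoint_isFixedPt

/-- The flow of a globally Lipschitz vector field, defined for all times. -/
def globalFlow (hX : LipschitzWith K X) (x : E) (t : ℝ) : E := coshWeight K t • weightedOrbit hX x t

lemma globalFlow_eq_integral (hX : LipschitzWith K X) (x : E) (t : ℝ) :
    globalFlow hX x t = x + ∫ s in (0 : ℝ)..t, X (globalFlow hX x s) := by
  rw [globalFlow, ← picardMap_weightedOrbit, picardMap_apply, smul_inv_smul₀ (coshWeight_pos t).ne']
  rfl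

@[simp]
lemma globalFlow_zero (hX : LipschitzWith K X) (x : E) : globalFlow hX x 0 = x := by
  rw [globalFlow_eq_integral, intervalIntegral.integral_same, add_zero]

lemma hasDerivAt_globalFlow (hX : LipschitzWith K X) (x : E) (t : ℝ) :
    HasDerivAt (globalFlow hX x) (X (globalFlow hX x t)) t := by
  have hcont := continuous_apply_coshWeight_smul hX (weightedOrbit hX x)
  have hderiv := (intervalIntegral.integral_hasDerivAt_right (hcont.intervalIntegrable 0 t)
    hcont.aestronglyMeasurable.stronglyMeasurableAtFilter hcont.continuousAt).const_add x
  exact hderiv.congr_of_eventuallyEq (Eventually.of_forall (globalFlow_eq_integral hX x))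

lemma continuous_weightedOrbit (hX : LipschitzWith K X) : Continuous (weightedOrbit hX) := by
  refine (LipschitzWith.of_dist_le_mul (K := 2) fun x y => ?_).continuous
  refine ((contractingWith_picardMap hX x).fixedPoint_lipschitz_in_map
    (contractingWith_picardMap hX y) (dist_picardMap_le hX x y)).trans_eq ?_
  push_cast
  ring

lemma continuous_globalFlow (hX : LipschitzWith K X) :
    Continuous fun q : E × ℝ => globalFlow hX q.1 q.2 :=
  (continuous_coshWeight.comp continuous_snd).smul (continuous_eval.comp
    (((continuous_weightedOrbit hX).comp continuous_fst).prodMk continuous_snd))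

section Order

variable [PartialOrder E] [IsOrderedAddMonoid E] [IsOrderedModule ℝ E] [OrderClosedTopology E]

lemma le_weightedOrbit_of_le_picardMap (hX : LipschitzWith K X) (hmono : Monotone X) {y : E}
    {u : ℝ →ᵇ E} (hu : ∀ t, 0 ≤ t → u t ≤ picardMap hX y u t) {t : ℝ} (ht : 0 ≤ t) :
    u t ≤ weightedOrbit hX y t := by
  have hiter (n : ℕ) : ∀ t, 0 ≤ t → u t ≤ (picardMap hX y)^[n] u t := by
    induction n with
    | zero => exact fun t _ => le_rfl
    | succ n ih =>
      intro t ht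
      rw [Function.iterate_succ_apply']
      exact (hu t ht).trans (picardMap_le_picardMap hX hmono le_rfl ih ht)
  have hlim : Tendsto (fun n => (picardMap hX y)^[n] u t) atTop (𝓝 (weightedOrbit hX y t)) :=
    ((continuous_eval_const t).tendsto _).comp
      ((contractingWith_picardMap hX y).tendsto_iterate_fixedPoint u)
  exact ge_of_tendsto' hlim fun n => hiter n t ht

lemma globalFlow_mono (hX : LipschitzWith K X) (hmono : Monotone X) {x y : E} (hxy : x ≤ y) {t : ℝ}
    (ht : 0 ≤ t) : globalFlow hX x t ≤ globalFlow hX y t := by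
  refine smul_le_smul_of_nonneg_left (le_weightedOrbit_of_le_picardMap hX hmono (fun s hs => ?_) ht)
    (coshWeight_pos t).le
  exact (congrArg (· s) (picardMap_weightedOrbit hX x)).ge.trans
    (picardMap_le_picardMap hX hmono hxy (fun _ _ => le_rfl) hs)

lemma globalFlow_nonneg (hX : LipschitzWith K X) (hmono : Monotone X) (hX0 : 0 ≤ X 0) {x : E}
    (hx : 0 ≤ x) {t : ℝ} (ht : 0 ≤ t) : 0 ≤ globalFlow hX x t := by
  refine smul_nonneg (coshWeight_pos t).le
    (le_weightedOrbit_of_le_picardMap hX hmono (u := 0) (fun s hs => ?_) ht)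
  simp only [picardMap_apply, intervalIntegral.integral_of_le hs,
    BoundedContinuousFunction.coe_zero, Pi.zero_apply, smul_zero]
  exact smul_nonneg (inv_nonneg.2 (coshWeight_pos s).le)
    (add_nonneg hx (integral_nonneg fun _ => hX0))

end Order

end GlobalFlow

/-! ### The factored first-order system -/

/-- The first-order form of `(d²/dt² - α) (d²/dt² - γ) v = h(v)`, in the unknowns `v`, `p = v'`,
`w = v'' - γ v` and `z = w'`. Its vector field is cooperative when `α, γ ≥ 0` and `h` is
monotone. -/
structure IsTrajectory (α γ : ℝ) (h v p w z : ℝ → ℝ) : Prop where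
  deriv_v : ∀ t, HasDerivAt v (p t) t
  deriv_p : ∀ t, HasDerivAt p (w t + γ * v t) t
  deriv_w : ∀ t, HasDerivAt w (z t) t
  deriv_z : ∀ t, HasDerivAt z (α * w t + h (v t)) t

/-- The vector field whose integral curves `(v, p, w, z)` are the solutions of `IsTrajectory`. -/
def factoredField (α γ : ℝ) (h : ℝ → ℝ) (x : ℝ × ℝ × ℝ × ℝ) : ℝ × ℝ × ℝ × ℝ :=
  (x.2.1, x.2.2.1 + γ * x.1, x.2.2.2, α * x.2.2.1 + h x.1)

section FactoredField

variable {α γ : ℝ} {h : ℝ → ℝ}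

lemma exists_lipschitzWith_factoredField (α γ : ℝ) {K : ℝ≥0} (hh : LipschitzWith K h) :
    ∃ K', LipschitzWith K' (factoredField α γ h) := by
  have hv : LipschitzWith 1 (fun x : ℝ × ℝ × ℝ × ℝ => x.1) := .prod_fst
  have hp := (LipschitzWith.prod_fst (α := ℝ) (β := ℝ × ℝ)).comp (.prod_snd (α := ℝ))
  have hw := (LipschitzWith.prod_fst (α := ℝ) (β := ℝ)).comp <|
    (LipschitzWith.prod_snd (α := ℝ)).comp (.prod_snd (α := ℝ))
  have hz := (LipschitzWith.prod_snd (α := ℝ) (β := ℝ)).comp <|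
    (LipschitzWith.prod_snd (α := ℝ)).comp (.prod_snd (α := ℝ))
  exact ⟨_, hp.prodMk <| (hw.add ((lipschitzWith_smul γ).comp hv)).prodMk <| hz.prodMk <|
    ((lipschitzWith_smul α).comp hw).add (hh.comp hv)⟩

lemma monotone_factoredField (hα : 0 ≤ α) (hγ : 0 ≤ γ) (hh : Monotone h) :
    Monotone (factoredField α γ h) := fun _ _ ⟨hv, hp, hw, hz⟩ =>
  ⟨hp, add_le_add hw (mul_le_mul_of_nonneg_left hv hγ), hz,
    add_le_add (mul_le_mul_of_nonneg_left hw hα) (hh hv)⟩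

lemma factoredField_zero_nonneg (α γ : ℝ) (h0 : 0 ≤ h 0) : 0 ≤ factoredField α γ h 0 :=
  ⟨by simp [factoredField], by simp [factoredField], by simp [factoredField],
    by simpa [factoredField] using h0⟩

lemma isTrajectory_iff_hasDerivAt {x : ℝ → ℝ × ℝ × ℝ × ℝ} :
    IsTrajectory α γ h (fun t => (x t).1) (fun t => (x t).2.1) (fun t => (x t).2.2.1)
      (fun t => (x t).2.2.2) ↔ ∀ t, HasDerivAt x (factoredField α γ h (x t)) t := by
  refine ⟨fun H t => (H.deriv_v t).prodMk ((H.deriv_p t).prodMk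
    ((H.deriv_w t).prodMk (H.deriv_z t))), fun H => ?_⟩
  exact ⟨fun t => (H t).fst, fun t => (H t).snd.fst, fun t => (H t).snd.snd.fst,
    fun t => (H t).snd.snd.snd⟩

end FactoredField

namespace IsTrajectory

variable {α γ : ℝ} {h v p w z : ℝ → ℝ} (H : IsTrajectory α γ h v p w z)
include H

lemma continuous_v : Continuous v := continuous_of_hasDerivAt H.deriv_v

lemma continuous_p : Continuous p := continuous_of_hasDerivAt H.deriv_p

lemma continuous_w : Continuous w := continuous_of_hasDerivAt H.deriv_w

lemma continuous_z : Continuous z := continuous_of_hasDerivAt H.deriv_z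

lemma hasDerivAt_deriv_p (t : ℝ) : HasDerivAt (fun t => w t + γ * v t) (z t + γ * p t) t :=
  (H.deriv_w t).add ((H.deriv_v t).const_mul γ)

lemma contDiff_four (hh : Continuous h) : ContDiff ℝ 4 v := by
  have hv₁ : ContDiff ℝ 1 v := mod_cast
    contDiff_add_one_of_hasDerivAt (n := 0) H.deriv_v (contDiff_zero.2 H.continuous_p)
  have hz₁ : ContDiff ℝ 1 z := mod_cast contDiff_add_one_of_hasDerivAt (n := 0) H.deriv_z <|
    contDiff_zero.2 ((H.continuous_w.const_mul α).add (hh.comp H.continuous_v))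
  have hw₂ : ContDiff ℝ 2 w := mod_cast contDiff_add_one_of_hasDerivAt (n := 1) H.deriv_w hz₁
  have hp₂ : ContDiff ℝ 2 p := mod_cast contDiff_add_one_of_hasDerivAt (n := 1) H.deriv_p
    ((hw₂.of_le one_le_two).add (contDiff_const.mul hv₁))
  have hv₃ : ContDiff ℝ 3 v := mod_cast contDiff_add_one_of_hasDerivAt (n := 2) H.deriv_v hp₂
  have hp₃ : ContDiff ℝ 3 p := mod_cast contDiff_add_one_of_hasDerivAt (n := 2) H.deriv_p
    (hw₂.add (contDiff_const.mul (hv₃.of_le (by norm_num))))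
  exact mod_cast contDiff_add_one_of_hasDerivAt (n := 3) H.deriv_v hp₃

lemma isSol : IsSol (α + γ) (α * γ) h v := by
  have h₂ : iteratedDeriv 2 v = fun t => w t + γ * v t := by
    rw [iteratedDeriv_succ, iteratedDeriv_one, funext fun t => (H.deriv_v t).deriv,
      funext fun t => (H.deriv_p t).deriv]
  have h₃ : iteratedDeriv 3 v = fun t => z t + γ * p t := by
    rw [iteratedDeriv_succ, h₂, funext fun t => (H.hasDerivAt_deriv_p t).deriv]
  intro t
  rw [iteratedDeriv_succ, h₃, h₂, ((H.deriv_z t).fun_add ((H.deriv_p t).const_mul γ)).deriv]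
  ring

lemma comp_const_sub (c : ℝ) : IsTrajectory α γ h (fun t => v (c - t)) (fun t => -p (c - t))
    (fun t => w (c - t)) (fun t => -z (c - t)) :=
  ⟨fun t => (H.deriv_v (c - t)).comp_const_sub c t,
    fun t => by simpa using ((H.deriv_p (c - t)).comp_const_sub c t).fun_neg,
    fun t => (H.deriv_w (c - t)).comp_const_sub c t,
    fun t => by simpa using ((H.deriv_z (c - t)).comp_const_sub c t).fun_neg⟩

lemma eq_of_eq_at {K : ℝ≥0} (hh : LipschitzWith K h) {v' p' w' z' : ℝ → ℝ}
    (H' : IsTrajectory α γ h v' p' w' z') {t₀ : ℝ} (hv : v t₀ = v' t₀) (hp : p t₀ = p' t₀)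
    (hw : w t₀ = w' t₀) (hz : z t₀ = z' t₀) : v = v' := by
  obtain ⟨K', hK'⟩ := exists_lipschitzWith_factoredField α γ hh
  have hD := isTrajectory_iff_hasDerivAt (x := fun t => (v t, p t, w t, z t)).1 H
  have hD' := isTrajectory_iff_hasDerivAt (x := fun t => (v' t, p' t, w' t, z' t)).1 H'
  have heq := ODE_solution_unique_univ (s := fun _ => univ) (t₀ := t₀)
    (fun _ => hK'.lipschitzOnWith) (fun t => ⟨hD t, mem_univ _⟩) (fun t => ⟨hD' t, mem_univ _⟩)
    (by simp only [hv, hp, hw, hz])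
  exact funext fun t => congrArg Prod.fst (congrFun heq t)

lemma reflection_symmetric {K : ℝ≥0} (hh : LipschitzWith K h) {c : ℝ} (hp : p c = 0) (hz : z c = 0)
    (t : ℝ) : v (2 * c - t) = v t := by
  have hc : 2 * c - c = c := by ring
  exact congrFun ((H.comp_const_sub (2 * c)).eq_of_eq_at hh H (t₀ := c) (by rw [hc])
    (by simp [hc, hp]) (by rw [hc]) (by simp [hc, hz])) t

end IsTrajectory

/-- The first integral of the factored system; `F` is an antiderivative of `x ↦ α γ x - h x`. -/
def energy (α γ : ℝ) (F v p w z : ℝ → ℝ) (t : ℝ) : ℝ :=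
  p t * (z t + γ * p t) - (w t + γ * v t) ^ 2 / 2 - (α + γ) / 2 * p t ^ 2 + F (v t)

lemma IsTrajectory.energy_eq {α γ : ℝ} {h v p w z F : ℝ → ℝ} (H : IsTrajectory α γ h v p w z)
    (hF : ∀ x, HasDerivAt F (α * γ * x - h x) x) (t t' : ℝ) :
    energy α γ F v p w z t = energy α γ F v p w z t' := by
  have hderiv (t : ℝ) : HasDerivAt (energy α γ F v p w z) 0 t := by
    have hprod := (H.deriv_p t).mul ((H.deriv_z t).add ((H.deriv_p t).const_mul γ))
    have hsq := ((H.hasDerivAt_deriv_p t).pow 2).div_const 2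
    have hkin := ((H.deriv_p t).pow 2).const_mul ((α + γ) / 2)
    exact (((hprod.sub hsq).sub hkin).add ((hF (v t)).comp t (H.deriv_v t))).congr_deriv
      (by simp; ring)
  exact is_const_of_deriv_eq_zero (fun t => (hderiv t).differentiableAt)
    (fun t => (hderiv t).deriv) t t'

/-! ### The shooting family -/

/-- A family of trajectories with `v(0) = a` and `v'(0) = v'''(0) = 0`, parametrised by the shooting
parameter `s = w(0) = v''(0) - γ a`, together with the regularity and the order properties of the
flow. -/
structure IsShootingFamily (α γ a : ℝ) (h : ℝ → ℝ) (v p w z : ℝ → ℝ → ℝ) : Prop where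
  isTrajectory : ∀ s, IsTrajectory α γ h (v s) (p s) (w s) (z s)
  v_zero : ∀ s, v s 0 = a
  p_zero : ∀ s, p s 0 = 0
  w_zero : ∀ s, w s 0 = s
  z_zero : ∀ s, z s 0 = 0
  continuous_v : Continuous fun q : ℝ × ℝ => v q.1 q.2
  continuous_p : Continuous fun q : ℝ × ℝ => p q.1 q.2
  continuous_w : Continuous fun q : ℝ × ℝ => w q.1 q.2
  continuous_z : Continuous fun q : ℝ × ℝ => z q.1 q.2
  p_mono : ∀ t, 0 ≤ t → Monotone fun s => p s t
  w_nonneg : ∀ s t, 0 ≤ s → 0 ≤ t → 0 ≤ w s t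

lemma exists_isShootingFamily {α γ a : ℝ} (hα : 0 ≤ α) (hγ : 0 ≤ γ) (ha : 0 ≤ a) {h : ℝ → ℝ}
    {K : ℝ≥0} (hLip : LipschitzWith K h) (hmono : Monotone h) (h0 : 0 ≤ h 0) :
    ∃ v p w z, IsShootingFamily α γ a h v p w z := by
  obtain ⟨K', hX⟩ := exists_lipschitzWith_factoredField α γ hLip
  have hXmono := monotone_factoredField hα hγ hmono
  let x (s t : ℝ) : ℝ × ℝ × ℝ × ℝ := globalFlow hX (a, 0, s, 0) t
  have hx0 (s : ℝ) : x s 0 = (a, 0, s, 0) := globalFlow_zero _ _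
  have hxcont : Continuous fun q : ℝ × ℝ => x q.1 q.2 :=
    (continuous_globalFlow hX).comp
      (f := fun q : ℝ × ℝ => ((a, (0 : ℝ), q.1, (0 : ℝ)), q.2)) (by fun_prop)
  have hxmono (t : ℝ) (ht : 0 ≤ t) : Monotone fun s => x s t := fun s s' hs =>
    globalFlow_mono hX hXmono (x := (a, 0, s, 0)) (y := (a, 0, s', 0))
      ⟨le_rfl, le_rfl, hs, le_rfl⟩ ht
  have hxnonneg (s t : ℝ) (hs : 0 ≤ s) (ht : 0 ≤ t) : 0 ≤ x s t :=
    globalFlow_nonneg hX hXmono (factoredField_zero_nonneg α γ h0) (x := (a, 0, s, 0))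
      ⟨ha, le_rfl, hs, le_rfl⟩ ht
  exact ⟨fun s t => (x s t).1, fun s t => (x s t).2.1, fun s t => (x s t).2.2.1,
    fun s t => (x s t).2.2.2,
    { isTrajectory := fun s => isTrajectory_iff_hasDerivAt.2 (hasDerivAt_globalFlow hX _)
      v_zero := fun s => by rw [hx0]
      p_zero := fun s => by rw [hx0]
      w_zero := fun s => by rw [hx0]
      z_zero := fun s => by rw [hx0]
      continuous_v := by fun_prop
      continuous_p := by fun_prop
      continuous_w := by fun_prop
      continuous_z := by fun_prop
      p_mono := fun t ht s s' hs => (hxmono t ht hs).2.1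
      w_nonneg := fun s t hs ht => (hxnonneg s t hs ht).2.2.1 }⟩

/-! ### The crossing nonlinearity -/

/-- `h` lies strictly below the line `x ↦ B x` at `a`, weakly below it up to `a₀`, and strictly
above it afterwards. -/
structure CrossesLine (B a a₀ : ℝ) (h : ℝ → ℝ) : Prop where
  lt_left : h a < B * a
  le_of_mem : ∀ x ∈ Icc a a₀, h x ≤ B * x
  lt_of_gt : ∀ x, a₀ < x → B * x < h x

/-- The antiderivative of `x ↦ B x - h x` vanishing at `a`. -/
def potential (B a : ℝ) (h : ℝ → ℝ) (x : ℝ) : ℝ := ∫ y in a..x, (B * y - h y)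

lemma hasDerivAt_potential (B a : ℝ) {h : ℝ → ℝ} (hh : Continuous h) (x : ℝ) :
    HasDerivAt (potential B a h) (B * x - h x) x := by
  have hcont : Continuous fun y => B * y - h y := by fun_prop
  exact intervalIntegral.integral_hasDerivAt_right (hcont.intervalIntegrable _ _)
    hcont.aestronglyMeasurable.stronglyMeasurableAtFilter hcont.continuousAt

lemma CrossesLine.antitoneOn_potential {B a a₀ : ℝ} {h : ℝ → ℝ} (hcross : CrossesLine B a a₀ h)
    (hh : Continuous h) : AntitoneOn (potential B a h) (Ici a₀) := by
  have hmono := monotoneOn_of_hasDerivAt_nonneg (fun x => (hasDerivAt_potential B a hh x).neg)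
    (convex_Ici a₀) fun x hx => by
      rw [interior_Ici] at hx
      linarith [hcross.lt_of_gt x hx]
  exact fun x hx y hy hxy => neg_le_neg_iff.1 (hmono hx hy hxy)

/-! ### Trajectories cannot rise forever below a height -/

namespace IsTrajectory

variable {α γ a a₀ : ℝ} {h v p w z : ℝ → ℝ} (H : IsTrajectory α γ h v p w z)
include H

-- With `x = w - α v` and `y = z - α p` the system reads `v' = p`, `p' = x + (α + γ) v`, `x' = y`,
-- `y' = h(v) - α γ v`, so that the sign of `h(v) - α γ v` propagates upwards.
lemma hasDerivAt_w_sub (t : ℝ) : HasDerivAt (fun t => w t - α * v t) (z t - α * p t) t :=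
  (H.deriv_w t).sub ((H.deriv_v t).const_mul α)

lemma hasDerivAt_z_sub (t : ℝ) :
    HasDerivAt (fun t => z t - α * p t) (h (v t) - α * γ * v t) t :=
  ((H.deriv_z t).sub ((H.deriv_p t).const_mul α)).congr_deriv (by ring)

lemma hasDerivAt_p_eq (t : ℝ) : HasDerivAt p (w t - α * v t + (α + γ) * v t) t :=
  (H.deriv_p t).congr_deriv (by ring)

lemma exists_p_neg_of_v_mem_Icc (hαγ : 0 ≤ α + γ) (hh : Continuous h)
    (hcross : CrossesLine (α * γ) a a₀ h) (hv0 : v 0 = a) (hz0 : z 0 - α * p 0 = 0)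
    (hv : ∀ t, 0 ≤ t → v t ∈ Icc a a₀) : ∃ t, 0 ≤ t ∧ p t < 0 := by
  have hcont : Continuous fun t => h (v t) - α * γ * v t :=
    (hh.comp H.continuous_v).sub (H.continuous_v.const_mul _)
  have hslope : ∀ᶠ t in 𝓝 (0 : ℝ), h (v t) - α * γ * v t < 0 :=
    hcont.continuousAt.eventually_lt_const (by simpa only [hv0, sub_neg] using hcross.lt_left)
  obtain ⟨δ, hyδ, hδ : 0 < δ⟩ := ((eventually_nhdsGT_lt_of_deriv_neg H.hasDerivAt_z_sub
    (hslope.filter_mono nhdsWithin_le_nhds)).and self_mem_nhdsWithin).exists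
  have hy_anti := monotoneOn_of_hasDerivAt_nonneg (fun t => (H.hasDerivAt_z_sub t).neg)
    (convex_Ici 0) fun t ht => by
      have ht : 0 ≤ t := interior_subset ht
      linarith [hcross.le_of_mem _ (hv t ht)]
  have hx := tendsto_atBot_of_deriv_le H.hasDerivAt_w_sub (hyδ.trans_eq hz0)
    ((eventually_ge_atTop δ).mono fun t ht =>
      neg_le_neg_iff.1 (hy_anti (mem_Ici.2 hδ.le) (mem_Ici.2 (hδ.le.trans ht)) ht))
  have hp := tendsto_atBot_of_deriv_le H.hasDerivAt_p_eq neg_one_lt_zero (by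
    filter_upwards [eventually_ge_atTop 0, hx.eventually_le_atBot (-1 - (α + γ) * a₀)] with t ht hxt
    linarith [mul_le_mul_of_nonneg_left (hv t ht).2 hαγ])
  exact ((eventually_ge_atTop 0).and (hp.eventually_lt_atBot 0)).exists

lemma tendsto_v_atTop_of_mem_Icc (hαγ : 0 ≤ α + γ) (hh : Continuous h)
    (hcross : CrossesLine (α * γ) a a₀ h) {m M : ℝ} (hm : a₀ < m)
    (hv : ∀ᶠ t in atTop, v t ∈ Icc m M) : Tendsto v atTop atTop := by
  obtain ⟨t₀, ht₀⟩ := hv.exists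
  obtain ⟨x₀, hx₀, hmin⟩ := isCompact_Icc.exists_isMinOn ⟨v t₀, ht₀⟩
    (f := fun x => h x - α * γ * x) (by fun_prop)
  have hy := tendsto_atTop_of_le_deriv H.hasDerivAt_z_sub
    (sub_pos.2 (hcross.lt_of_gt x₀ (hm.trans_le hx₀.1))) (hv.mono fun t ht => hmin ht)
  have hx := tendsto_atTop_of_le_deriv H.hasDerivAt_w_sub one_pos (hy.eventually_ge_atTop 1)
  have hp := tendsto_atTop_of_le_deriv H.hasDerivAt_p_eq one_pos (by
    filter_upwards [hv, hx.eventually_ge_atTop (1 - (α + γ) * m)] with t ht hxt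
    linarith [mul_le_mul_of_nonneg_left ht.1 hαγ])
  exact tendsto_atTop_of_le_deriv H.deriv_v one_pos (hp.eventually_ge_atTop 1)

lemma exists_p_neg_or_lt_v (hαγ : 0 ≤ α + γ) (hh : Continuous h)
    (hcross : CrossesLine (α * γ) a a₀ h) (hv0 : v 0 = a) (hz0 : z 0 - α * p 0 = 0) (M : ℝ) :
    ∃ t, 0 ≤ t ∧ (p t < 0 ∨ M < v t) := by
  by_contra! hcon
  have hmono : MonotoneOn v (Ici 0) := monotoneOn_of_hasDerivAt_nonneg H.deriv_v (convex_Ici 0)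
    fun t ht => (hcon t (interior_subset ht)).1
  by_cases hbelow : ∀ t, 0 ≤ t → v t ≤ a₀
  · obtain ⟨t, ht, hpt⟩ := H.exists_p_neg_of_v_mem_Icc hαγ hh hcross hv0 hz0
      fun t ht => ⟨hv0 ▸ hmono (mem_Ici.2 le_rfl) (mem_Ici.2 ht) ht, hbelow t ht⟩
    exact (hcon t ht).1.not_gt hpt
  · push Not at hbelow
    obtain ⟨t₁, ht₁, hvt₁⟩ := hbelow
    have htop := H.tendsto_v_atTop_of_mem_Icc hαγ hh hcross (M := M) hvt₁
      ((eventually_ge_atTop t₁).mono fun t ht =>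
        ⟨hmono (mem_Ici.2 ht₁) (mem_Ici.2 (ht₁.trans ht)) ht, (hcon t (ht₁.trans ht)).2⟩)
    obtain ⟨t, ht, hMt⟩ := ((eventually_ge_atTop 0).and (htop.eventually_gt_atTop M)).exists
    exact (hcon t ht).2.not_gt hMt

end IsTrajectory

/-! ### Shooting -/

/-- The shooting parameters for which `v` turns round at a first critical point where
`v''' < 0`. -/
def turningSet (γ a : ℝ) (p z : ℝ → ℝ → ℝ) : Set ℝ :=
  {s | -(γ * a) < s ∧ ∃ T, IsFirstZero (p s) T ∧ z s T < 0}

namespace IsShootingFamily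

variable {α γ a a₀ M : ℝ} {h : ℝ → ℝ} {v p w z : ℝ → ℝ → ℝ}

variable (𝓕 : IsShootingFamily α γ a h v p w z)
include 𝓕

lemma eventually_p_pos {s : ℝ} (hs : -(γ * a) < s) : ∀ᶠ t in 𝓝[>] 0, 0 < p s t := by
  have H := 𝓕.isTrajectory s
  have hcont : Continuous fun t => w s t + γ * v s t :=
    H.continuous_w.add (H.continuous_v.const_mul γ)
  have hp' : ∀ᶠ t in 𝓝 (0 : ℝ), 0 < w s t + γ * v s t :=
    hcont.continuousAt.eventually_const_lt (by simp only [𝓕.w_zero, 𝓕.v_zero]; linarith)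
  simpa only [𝓕.p_zero] using
    eventually_nhdsGT_lt_of_deriv_pos H.deriv_p (hp'.filter_mono nhdsWithin_le_nhds)

lemma v_mem_Icc_of_isFirstZero {s T t : ℝ} (hT : IsFirstZero (p s) T) (ht : t ∈ Icc 0 T) :
    v s t ∈ Icc a (v s T) := by
  have hmono : MonotoneOn (v s) (Icc 0 T) := monotoneOn_of_hasDerivAt_nonneg
    (𝓕.isTrajectory s).deriv_v (convex_Icc 0 T) fun t ht => by
      rw [interior_Icc] at ht
      exact (hT.pos_of_mem t ht).le
  exact ⟨𝓕.v_zero s ▸ hmono ⟨le_rfl, hT.pos.le⟩ ht ht.1, hmono ht ⟨hT.pos.le, le_rfl⟩ ht.2⟩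

lemma neg_of_isFirstZero (hγ : 0 < γ) (ha : 0 < a) {s T : ℝ} (hT : IsFirstZero (p s) T) :
    s < 0 := by
  by_contra! hs
  have hmono := strictMonoOn_of_hasDerivAt_pos (𝓕.isTrajectory s).deriv_p (convex_Icc 0 T)
    fun t ht => by
      have ht : t ∈ Icc 0 T := interior_subset ht
      have hva := (𝓕.v_mem_Icc_of_isFirstZero hT ht).1
      exact add_pos_of_nonneg_of_pos (𝓕.w_nonneg s t hs ht.1) (mul_pos hγ (ha.trans_le hva))
  have hlt := hmono ⟨le_rfl, hT.pos.le⟩ ⟨hT.pos.le, le_rfl⟩ hT.pos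
  exact (hlt.trans_eq hT.eq_zero).ne (𝓕.p_zero s)

lemma v_lt_of_p_eq_zero (hh : Continuous h) (hcross : CrossesLine (α * γ) a a₀ h) (haM : a₀ ≤ M)
    (hM : potential (α * γ) a h M < -((γ * a) ^ 2 / 2)) {s T : ℝ} (hs : -(γ * a) ≤ s) (hs0 : s ≤ 0)
    (hpT : p s T = 0) : v s T < M := by
  by_contra! hvM
  have hpot : potential (α * γ) a h (v s T) ≤ potential (α * γ) a h M :=
    hcross.antitoneOn_potential hh haM (haM.trans hvM) hvM
  have henergy := (𝓕.isTrajectory s).energy_eq (hasDerivAt_potential _ a hh) T 0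
  simp only [energy, hpT, 𝓕.p_zero, 𝓕.w_zero, 𝓕.v_zero, potential, intervalIntegral.integral_same]
    at henergy hpot hM
  nlinarith [sq_nonneg (w s T + γ * v s T)]

lemma eventually_z_neg (hh : Continuous h) (ha : h a < α * γ * a) :
    ∀ᶠ q in 𝓝 (-(γ * a), (0 : ℝ)), 0 < q.2 → z q.1 q.2 < 0 := by
  have hcont : Continuous fun q : ℝ × ℝ => α * w q.1 q.2 + h (v q.1 q.2) :=
    (𝓕.continuous_w.const_mul α).add (hh.comp 𝓕.continuous_v)
  have hz' : ∀ᶠ q in 𝓝 (-(γ * a), (0 : ℝ)), α * w q.1 q.2 + h (v q.1 q.2) < 0 :=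
    hcont.continuousAt.eventually_lt_const (by simp only [𝓕.w_zero, 𝓕.v_zero]; linarith)
  rw [nhds_prod_eq, eventually_prod_iff] at hz'
  obtain ⟨P, hP, Q, hQ, hPQ⟩ := hz'
  have hQ_Icc : ∀ᶠ τ in 𝓝 0, ∀ t ∈ Icc 0 τ, Q t :=
    (tendsto_const_nhds.Icc tendsto_id).eventually (eventually_smallSets_forall.2 hQ)
  rw [nhds_prod_eq]
  filter_upwards [hP.prod_mk hQ_Icc] with q ⟨hq₁, hq₂⟩ hpos
  have hmono := strictMonoOn_of_hasDerivAt_pos (fun t => ((𝓕.isTrajectory q.1).deriv_z t).neg)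
    (convex_Icc 0 q.2) fun t ht => neg_pos.2 (hPQ hq₁ (hq₂ t (interior_subset ht)))
  have hlt := hmono ⟨le_rfl, hpos.le⟩ ⟨hpos.le, le_rfl⟩ hpos
  simpa [𝓕.z_zero] using hlt

lemma exists_mem_turningSet_gt {s T : ℝ} (hs : -(γ * a) ≤ s) (hT : 0 ≤ T)
    (hpos : ∀ t ∈ Ioo 0 T, 0 < p s t) (hneg : ∀ᶠ t in 𝓝[>] T, p s t < 0)
    (hz : ∀ᶠ q in 𝓝 (s, T), 0 < q.2 → z q.1 q.2 < 0) : ∃ s' ∈ turningSet γ a p z, s < s' := by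
  rw [nhds_prod_eq, eventually_prod_iff] at hz
  obtain ⟨P, hP, Q, hQ, hPQ⟩ := hz
  have hQ_Icc : ∀ᶠ τ in 𝓝[>] T, ∀ t ∈ Icc T τ, Q t :=
    ((tendsto_const_nhds.Icc tendsto_id).eventually
      (eventually_smallSets_forall.2 hQ)).filter_mono nhdsWithin_le_nhds
  obtain ⟨τ, ⟨hpτ, hQτ⟩, hTτ : T < τ⟩ := ((hneg.and hQ_Icc).and self_mem_nhdsWithin).exists
  have hpτ_near : ∀ᶠ s' in 𝓝 s, p s' τ < 0 :=
    (𝓕.continuous_p.comp (.prodMk_left τ)).continuousAt.eventually_lt_const hpτ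
  obtain ⟨s', ⟨hPs', hps'⟩, hss' : s < s'⟩ :=
    (((hP.and hpτ_near).filter_mono nhdsWithin_le_nhds).and
      (self_mem_nhdsWithin : Ioi s ∈ 𝓝[>] s)).exists
  have hs' := hs.trans_lt hss'
  obtain ⟨T', hT'τ, hT'⟩ := IsFirstZero.exists_of_pos_of_neg (𝓕.isTrajectory s').continuous_p
    (𝓕.eventually_p_pos hs') (hT.trans_lt hTτ) hps'
  have hTT' : T ≤ T' := by
    by_contra! hlt
    exact ((hpos T' ⟨hT'.pos, hlt⟩).trans_le (𝓕.p_mono T' hT'.pos.le hss'.le)).ne' hT'.eq_zero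
  exact ⟨s', ⟨hs', T', hT', hPQ hPs' (hQτ T' ⟨hTT', hT'τ.le⟩) hT'.pos⟩, hss'⟩

lemma turningSet_nonempty (hh : Continuous h) (ha : h a < α * γ * a) :
    (turningSet γ a p z).Nonempty := by
  have H := 𝓕.isTrajectory (-(γ * a))
  have hcont : Continuous fun t => α * w (-(γ * a)) t + h (v (-(γ * a)) t) +
      γ * (w (-(γ * a)) t + γ * v (-(γ * a)) t) := by
    have := H.continuous_w
    have := H.continuous_v
    fun_prop
  have hp₄ : ∀ᶠ t in 𝓝 (0 : ℝ), α * w (-(γ * a)) t + h (v (-(γ * a)) t) +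
      γ * (w (-(γ * a)) t + γ * v (-(γ * a)) t) < 0 :=
    hcont.continuousAt.eventually_lt_const (by simp only [𝓕.w_zero, 𝓕.v_zero]; linarith)
  have hp₃ := eventually_nhdsGT_lt_of_deriv_neg
    (fun t => (H.deriv_z t).add ((H.deriv_p t).const_mul γ)) (hp₄.filter_mono nhdsWithin_le_nhds)
  have hp₂ := eventually_nhdsGT_lt_of_deriv_neg H.hasDerivAt_deriv_p
    (by simpa [𝓕.z_zero, 𝓕.p_zero] using hp₃)
  have hp₁ := eventually_nhdsGT_lt_of_deriv_neg H.deriv_p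
    (by simpa [𝓕.w_zero, 𝓕.v_zero] using hp₂)
  obtain ⟨s, hs, -⟩ := 𝓕.exists_mem_turningSet_gt le_rfl le_rfl (by simp)
    (by simpa [𝓕.p_zero] using hp₁) (𝓕.eventually_z_neg hh ha)
  exact ⟨s, hs⟩

lemma exists_mem_turningSet_gt_of_mem {s : ℝ} (hs : s ∈ turningSet γ a p z) :
    ∃ s' ∈ turningSet γ a p z, s < s' := by
  obtain ⟨hs, T, hT, hzT⟩ := hs
  have H := 𝓕.isTrajectory s
  have hz_near : ∀ᶠ q in 𝓝 (s, T), z q.1 q.2 < 0 :=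
    𝓕.continuous_z.continuousAt.eventually_lt_const hzT
  have hcont : Continuous fun t => z s t + γ * p s t :=
    H.continuous_z.add (H.continuous_p.const_mul γ)
  have hp₂_neg : ∀ᶠ t in 𝓝 T, z s t + γ * p s t < 0 :=
    hcont.continuousAt.eventually_lt_const (by simpa [hT.eq_zero] using hzT)
  have hp_left : ∀ᶠ t in 𝓝[<] T, p s T < p s t :=
    (eventually_of_mem (Ioo_mem_nhdsLT hT.pos) hT.pos_of_mem).mono fun t ht =>
      hT.eq_zero.trans_lt ht
  have hp₁_neg : w s T + γ * v s T < 0 := deriv_neg_of_pos_left_of_deriv_deriv_neg H.deriv_p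
    H.hasDerivAt_deriv_p hp_left (hp₂_neg.filter_mono nhdsWithin_le_nhds)
  have hp₁_near :=
    (H.continuous_w.add (H.continuous_v.const_mul γ)).continuousAt.eventually_lt_const hp₁_neg
  have hp_right := eventually_nhdsGT_lt_of_deriv_neg H.deriv_p
    (hp₁_near.filter_mono nhdsWithin_le_nhds)
  exact 𝓕.exists_mem_turningSet_gt hs.le hT.pos.le hT.pos_of_mem
    (by simpa [hT.eq_zero] using hp_right) (hz_near.mono fun q hq _ => hq)

lemma not_tendsto_firstZero_atTop (hαγ : 0 ≤ α + γ) (hh : Continuous h)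
    (hcross : CrossesLine (α * γ) a a₀ h) {ι : Type*} {l : Filter ι} [l.NeBot] {u τ : ι → ℝ} {σ : ℝ}
    (hu : Tendsto u l (𝓝 σ)) (hzero : ∀ i, IsFirstZero (p (u i)) (τ i))
    (hM : ∀ i, v (u i) (τ i) ≤ M) : ¬ Tendsto τ l atTop := by
  intro hτ
  have hrising : ∀ t, 0 ≤ t → 0 ≤ p σ t ∧ v σ t ≤ M := by
    intro t ht
    have htτ := hτ.eventually_gt_atTop t
    refine ⟨ge_of_tendsto (((𝓕.continuous_p.comp (.prodMk_left t)).tendsto σ).comp hu) ?_,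
      le_of_tendsto (((𝓕.continuous_v.comp (.prodMk_left t)).tendsto σ).comp hu) ?_⟩
    · rcases ht.eq_or_lt with rfl | ht
      · exact .of_forall fun i => (𝓕.p_zero (u i)).ge
      · exact htτ.mono fun i hi => ((hzero i).pos_of_mem t ⟨ht, hi⟩).le
    · exact htτ.mono fun i hi =>
        (𝓕.v_mem_Icc_of_isFirstZero (hzero i) ⟨ht, hi.le⟩).2.trans (hM i)
  obtain ⟨t, ht, hpt | hvt⟩ := (𝓕.isTrajectory σ).exists_p_neg_or_lt_v hαγ hh hcross (𝓕.v_zero σ)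
    (by rw [𝓕.z_zero, 𝓕.p_zero, mul_zero, sub_zero]) M
  · exact (hrising t ht).1.not_gt hpt
  · exact (hrising t ht).2.not_gt hvt

lemma exists_isFirstZero_and_z_eq_zero (hα : 0 ≤ α) (hγ : 0 < γ) (ha : 0 < a) (hh : Continuous h)
    (hcross : CrossesLine (α * γ) a a₀ h) (haM : a₀ ≤ M)
    (hM : potential (α * γ) a h M < -((γ * a) ^ 2 / 2)) :
    ∃ s T, IsFirstZero (p s) T ∧ z s T = 0 ∧ v s T < M := by
  have hvM {s T : ℝ} (hs : -(γ * a) < s) (hT : IsFirstZero (p s) T) : v s T < M :=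
    𝓕.v_lt_of_p_eq_zero hh hcross haM hM hs.le (𝓕.neg_of_isFirstZero hγ ha hT).le hT.eq_zero
  set S := turningSet γ a p z
  have hS : S.Nonempty := 𝓕.turningSet_nonempty hh hcross.lt_left
  have hSbdd : BddAbove S := ⟨0, fun s ⟨_, _, hT, _⟩ => (𝓕.neg_of_isFirstZero hγ ha hT).le⟩
  have hσ : IsLUB S (sSup S) := isLUB_csSup hS hSbdd
  have : Nonempty S := hS.to_subtype
  have hσ_gt : -(γ * a) < sSup S := hS.some_mem.1.trans_le (hσ.1 hS.some_mem)
  have hu : Tendsto ((↑) : S → ℝ) atTop (𝓝 (sSup S)) :=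
    tendsto_atTop_isLUB (Subtype.mono_coe _) (by rwa [Subtype.range_coe])
  choose τ hτ hzτ using fun s : S => s.2.2
  have hτmono : Monotone τ := fun s s' hss' =>
    (hτ s).le_of_le (hτ s') fun t ht => 𝓕.p_mono t ht hss'
  obtain hτtop | ⟨T, hτT⟩ := tendsto_atTop_of_monotone hτmono
  · exact absurd hτtop <| 𝓕.not_tendsto_firstZero_atTop (by positivity) hh hcross hu hτ
      fun s => (hvM s.2.1 (hτ s)).le
  have hT : IsFirstZero (p (sSup S)) T := .of_tendsto 𝓕.continuous_p 𝓕.p_mono hu hτT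
    (fun s => hσ.1 s.2) (fun s => hτmono.ge_of_tendsto hτT s) hτ
  have hzT : z (sSup S) T ≤ 0 := le_of_tendsto
    ((𝓕.continuous_z.tendsto (sSup S, T)).comp (hu.prodMk_nhds hτT))
    (.of_forall fun s => (hzτ s).le)
  refine ⟨sSup S, T, hT, hzT.eq_of_not_lt fun hlt => ?_, hvM hσ_gt hT⟩
  obtain ⟨s, hs, hlt⟩ := 𝓕.exists_mem_turningSet_gt_of_mem ⟨hσ_gt, T, hT, hlt⟩
  exact (hσ.1 hs).not_gt hlt

end IsShootingFamily

/-! ### Truncation of the nonlinearity -/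

section StrictMonoOnDiv

variable {a a₀ B : ℝ} {g : ℝ → ℝ}

lemma monotoneOn_of_monotoneOn_div_self (hpos : ∀ t > 0, 0 < g t)
    (hmono : MonotoneOn (fun t => g t / t) (Ioi 0)) : MonotoneOn g (Ioi 0) := by
  intro x (hx : 0 < x) y (hy : 0 < y) hxy
  calc g x = g x / x * x := (div_mul_cancel₀ _ hx.ne').symm
    _ ≤ g y / y * y :=
      mul_le_mul (hmono hx hy hxy) hxy hx.le (div_nonneg (hpos y hy).le hy.le)
    _ = g y := div_mul_cancel₀ _ hy.ne'

lemma crossesLine_of_strictMonoOn_div_self (hmono : StrictMonoOn (fun t => g t / t) (Ioi 0))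
    (ha : 0 < a) (haa₀ : a < a₀) (hga₀ : g a₀ = B * a₀) : CrossesLine B a a₀ g := by
  have ha₀ : 0 < a₀ := ha.trans haa₀
  have hB : g a₀ / a₀ = B := by rw [hga₀, mul_div_cancel_right₀ _ ha₀.ne']
  have hbelow {x : ℝ} (hx : 0 < x) (hxa₀ : x < a₀) : g x < B * x :=
    (div_lt_iff₀ hx).1 ((hmono hx ha₀ hxa₀).trans_eq hB)
  refine ⟨hbelow ha haa₀, fun x hx => ?_, fun x hx => ?_⟩
  · rcases hx.2.eq_or_lt with rfl | hlt
    · exact hga₀.le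
    · exact (hbelow (ha.trans_le hx.1) hlt).le
  · exact (lt_div_iff₀ (ha₀.trans hx)).1 (hB.symm.trans_lt (hmono ha₀ (ha₀.trans hx) hx))

lemma potential_congr {h : ℝ → ℝ} {x : ℝ} (hax : a ≤ x) (hgh : EqOn g h (Icc a x)) :
    potential B a g x = potential B a h x :=
  intervalIntegral.integral_congr fun y hy => by
    simp only [hgh (uIcc_of_le hax ▸ hy)]

lemma tendsto_potential_atBot (hcont : ContinuousOn g (Ioi 0))
    (hmono : StrictMonoOn (fun t => g t / t) (Ioi 0)) (ha : 0 < a) (hga₀ : g a₀ = B * a₀)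
    (ha₀ : 0 < a₀) : Tendsto (potential B a g) atTop atBot := by
  let k (x : ℝ) : ℝ := g (max a x)
  have hk : Continuous k := hcont.comp_continuous (by fun_prop) fun x => lt_max_of_lt_left ha
  have hkg : EqOn g k (Ici a) := fun x hx => by simp only [k, max_eq_right (mem_Ici.1 hx)]
  set b := max a (a₀ + 1)
  have hb : a₀ < b := (lt_add_one a₀).trans_le (le_max_right _ _)
  have hslope : 0 < g b / b - B := by
    have hlt := hmono ha₀ (ha₀.trans hb) hb
    simp only [hga₀, mul_div_cancel_right₀ _ ha₀.ne'] at hlt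
    exact sub_pos.2 hlt
  have hderiv : ∀ x ≥ b, B * x - k x ≤ -((g b / b - B) * b) := by
    intro x hx
    have hx0 : 0 < x := (ha₀.trans hb).trans_le hx
    rw [← hkg ((le_max_left _ _).trans hx)]
    have hgx : g b / b * x ≤ g x := (le_div_iff₀ hx0).1 (hmono.monotoneOn (ha₀.trans hb) hx0 hx)
    linarith [mul_le_mul_of_nonneg_left hx hslope.le]
  refine (tendsto_atBot_of_deriv_le (hasDerivAt_potential B a hk)
    (neg_neg_of_pos (mul_pos hslope (ha₀.trans hb)))
    ((eventually_ge_atTop b).mono hderiv)).congr' ?_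
  filter_upwards [eventually_ge_atTop a] with x hx
  exact (potential_congr hx (hkg.mono Icc_subset_Ici_self)).symm

end StrictMonoOnDiv

/-- The extension of `g` from `[a, M]` to `ℝ` by a constant on the left and by an affine function
of slope `B` on the right: it keeps `g` Lipschitz, monotone and above the line `x ↦ B x`. -/
def affineTruncation (B : ℝ) {a M : ℝ} (haM : a ≤ M) (g : ℝ → ℝ) (x : ℝ) : ℝ :=
  IccExtend haM ((Icc a M).domRestrict g) x + B * max (x - M) 0

section AffineTruncation

variable {B a a₀ M : ℝ} {g : ℝ → ℝ}

lemma affineTruncation_of_mem (haM : a ≤ M) {x : ℝ} (hx : x ∈ Icc a M) :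
    affineTruncation B haM g x = g x := by
  rw [affineTruncation, IccExtend_of_mem _ _ hx, max_eq_right (sub_nonpos.2 hx.2), mul_zero,
    add_zero, domRestrict_apply]

lemma affineTruncation_of_le_left (haM : a ≤ M) {x : ℝ} (hx : x ≤ a) :
    affineTruncation B haM g x = g a := by
  rw [affineTruncation, IccExtend_of_le_left _ _ hx,
    max_eq_right (sub_nonpos.2 (hx.trans haM)), mul_zero, add_zero, domRestrict_apply]

lemma affineTruncation_of_right_le (haM : a ≤ M) {x : ℝ} (hx : M ≤ x) :
    affineTruncation B haM g x = g M + B * (x - M) := by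
  rw [affineTruncation, IccExtend_of_right_le _ _ hx, max_eq_left (sub_nonneg.2 hx),
    domRestrict_apply]

lemma exists_lipschitzWith_affineTruncation (B : ℝ) (haM : a ≤ M) {K : ℝ≥0}
    (hg : LipschitzOnWith K g (Icc a M)) : ∃ K', LipschitzWith K' (affineTruncation B haM g) :=
  ⟨_, (hg.to_restrict.comp (.projIcc haM)).add <| (lipschitzWith_smul B).comp <|
    (LipschitzWith.id.sub (.const M)).max_const 0⟩

lemma monotone_affineTruncation (hB : 0 ≤ B) (haM : a ≤ M) (hg : MonotoneOn g (Icc a M)) :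
    Monotone (affineTruncation B haM g) :=
  (monotoneOn_iff_monotone.1 hg).IccExtend haM |>.add fun _ _ hxy =>
    mul_le_mul_of_nonneg_left (max_le_max_right 0 (sub_le_sub_right hxy M)) hB

lemma CrossesLine.affineTruncation (haa₀ : a < a₀) (ha₀M : a₀ < M) (hcross : CrossesLine B a a₀ g) :
    CrossesLine B a a₀ (affineTruncation B (haa₀.trans ha₀M).le g) where
  lt_left := by
    rw [affineTruncation_of_le_left _ le_rfl]
    exact hcross.lt_left
  le_of_mem x hx := by
    rw [affineTruncation_of_mem _ ⟨hx.1, hx.2.trans ha₀M.le⟩]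
    exact hcross.le_of_mem x hx
  lt_of_gt x hx := by
    rcases le_total x M with hxM | hMx
    · rw [affineTruncation_of_mem _ ⟨(haa₀.trans hx).le, hxM⟩]
      exact hcross.lt_of_gt x hx
    · rw [affineTruncation_of_right_le _ hMx]
      linarith [hcross.lt_of_gt M ha₀M]

end AffineTruncation

/-! ### Periodic solutions -/

lemma exists_isSol_reflection_symmetric {α γ a a₀ M : ℝ} {h : ℝ → ℝ} {K : ℝ≥0} (hα : 0 ≤ α)
    (hγ : 0 < γ) (ha : 0 < a) (hLip : LipschitzWith K h) (hmono : Monotone h) (h0 : 0 ≤ h 0)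
    (hcross : CrossesLine (α * γ) a a₀ h) (haM : a₀ ≤ M)
    (hM : potential (α * γ) a h M < -((γ * a) ^ 2 / 2)) :
    ∃ v T, 0 < T ∧ ContDiff ℝ 4 v ∧ IsSol (α + γ) (α * γ) h v ∧ (∀ t, v (-t) = v t) ∧
      (∀ t, v (2 * T - t) = v t) ∧ StrictAntiOn v (Icc 0 T) ∧ v T = a ∧ v 0 < M := by
  have hh := hLip.continuous
  obtain ⟨v, p, w, z, 𝓕⟩ := exists_isShootingFamily hα hγ.le ha.le hLip hmono h0
  obtain ⟨s, T, hT, hzT, hvT⟩ :=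
    𝓕.exists_isFirstZero_and_z_eq_zero hα hγ ha hh hcross haM hM
  have H := 𝓕.isTrajectory s
  have hsymm_zero (t : ℝ) : v s (-t) = v s t := by
    simpa using H.reflection_symmetric hLip (𝓕.p_zero s) (𝓕.z_zero s) t
  have hsymm_T := H.reflection_symmetric hLip hT.eq_zero hzT
  -- The reflected trajectory has its maximum, rather than its minimum, at `0`.
  have H' := H.comp_const_sub T
  have hvmono : StrictMonoOn (v s) (Icc 0 T) := strictMonoOn_of_hasDerivAt_pos H.deriv_v
    (convex_Icc 0 T) fun t ht => hT.pos_of_mem t (by rwa [interior_Icc] at ht)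
  refine ⟨_, T, hT.pos, H'.contDiff_four hh, H'.isSol, fun t => ?_, fun t => ?_,
    fun x hx y hy hxy => hvmono ⟨by linarith [hy.2], by linarith [hy.1]⟩
      ⟨by linarith [hx.2], by linarith [hx.1]⟩ (by linarith), ?_, ?_⟩
  · rw [← hsymm_T]
    congr 1
    ring
  · rw [← hsymm_zero]
    congr 1
    ring
  · rw [sub_self, 𝓕.v_zero]
  · rwa [sub_zero]

lemma exists_pos_add_eq_mul_eq {A B : ℝ} (hA : 0 < A) (hB : 0 < B) (hAB : 4 * B ≤ A ^ 2) :
    ∃ α γ, 0 < α ∧ 0 < γ ∧ α + γ = A ∧ α * γ = B := by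
  have hD : √(A ^ 2 - 4 * B) ^ 2 = A ^ 2 - 4 * B := sq_sqrt (by linarith)
  have hlt : √(A ^ 2 - 4 * B) < A := (sqrt_lt' hA).2 (by linarith)
  exact ⟨(A + √(A ^ 2 - 4 * B)) / 2, (A - √(A ^ 2 - 4 * B)) / 2, by positivity, by linarith,
    by ring, by linarith⟩

theorem stmt_2_general {g : ℝ → ℝ} (hLip : LocallyLipschitzOn (Ioi 0) g) (hpos : ∀ t > 0, 0 < g t)
    (hmono : StrictMonoOn (fun t => g t / t) (Ioi 0)) {A B a₀ a : ℝ} (hA : 0 < A) (hB : 0 < B)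
    (hAB : 4 * B ≤ A ^ 2) (hga₀ : g a₀ = B * a₀) (ha : 0 < a) (haa₀ : a < a₀) :
    ∃ (v : ℝ → ℝ) (L : ℝ), 0 < L ∧ ContDiff ℝ 4 v ∧ (∀ t, 0 < v t) ∧ IsSol A B g v ∧
      (∀ t, v (t + L) = v t) ∧ (∀ t, v (-t) = v t) ∧ (∀ t, v t ≤ v 0) ∧
      (∀ t, a ≤ v t) ∧ v (L / 2) = a ∧ StrictAntiOn v (Set.Icc 0 (L / 2)) ∧
      (⨅ t : ℝ, v t) = a ∧ ∃ M : ℝ, ∀ t, v t ≤ M := by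
  obtain ⟨α, γ, hα, hγ, rfl, rfl⟩ := exists_pos_add_eq_mul_eq hA hB hAB
  obtain ⟨M, hpotM, haM⟩ := (((tendsto_potential_atBot hLip.continuousOn hmono ha hga₀
    (ha.trans haa₀)).eventually_lt_atBot (-((γ * a) ^ 2 / 2))).and (eventually_gt_atTop a₀)).exists
  have hIcc : Icc a M ⊆ Ioi 0 := fun x hx => ha.trans_le hx.1
  have haM' : a ≤ M := (haa₀.trans haM).le
  obtain ⟨K, hK⟩ := (hLip.mono hIcc).exists_lipschitzOnWith_of_compact isCompact_Icc
  obtain ⟨K', hK'⟩ := exists_lipschitzWith_affineTruncation (α * γ) haM' hK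
  obtain ⟨v, T, hT, hdiff, hsol, hzero, hreflect, hanti, hvT, hvM⟩ :=
    exists_isSol_reflection_symmetric hα.le hγ ha hK'
      (monotone_affineTruncation hB.le haM'
        ((monotoneOn_of_monotoneOn_div_self hpos hmono.monotoneOn).mono hIcc))
      ((hpos a ha).le.trans_eq (affineTruncation_of_le_left haM' ha.le).symm)
      ((crossesLine_of_strictMonoOn_div_self hmono ha haa₀ hga₀).affineTruncation haa₀ haM) haM.le
      ((potential_congr haM' fun x hx => affineTruncation_of_mem haM' hx).trans_lt hpotM)
  have hrange (t : ℝ) : v t ∈ Icc a (v 0) :=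
    hvT ▸ image_mem_Icc_of_antitoneOn hzero hreflect hT hanti.antitoneOn t
  have hinf : ⨅ t, v t = a := IsLeast.csInf_eq ⟨⟨T, hvT⟩, forall_mem_range.2 fun t => (hrange t).1⟩
  rw [← mul_div_cancel_left₀ T two_ne_zero] at hvT hanti
  exact ⟨v, 2 * T, by positivity, hdiff, fun t => ha.trans_le (hrange t).1,
    fun t => (hsol t).trans <|
      affineTruncation_of_mem haM' ⟨(hrange t).1, (hrange t).2.trans hvM.le⟩,
    periodic_of_two_reflections hzero hreflect, hzero, fun t => (hrange t).2,
    fun t => (hrange t).1, hvT, hanti, hinf, v 0, fun t => (hrange t).2⟩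

/-! ### Conditions (G) -/

namespace CondG

variable {n : ℕ} {g : ℝ → ℝ} (hg : CondG n g)
include hg

lemma locallyLipschitzOn : LocallyLipschitzOn (Ioi 0) g := fun x hx => by
  obtain ⟨K, s, hs, hK⟩ := (hg.1.contDiffAt (Ioi_mem_nhds hx)).exists_lipschitzOnWith
  exact ⟨K, s, mem_nhdsWithin_of_mem_nhds hs, hK⟩

lemma strictMonoOn_div_self : StrictMonoOn (fun t => g t / t) (Ioi 0) := by
  have hderiv (t : ℝ) (ht : t ∈ Ioi (0 : ℝ)) :
      HasDerivAt (fun t => g t / t) ((deriv g t * t - g t * 1) / t ^ 2) t :=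
    ((hg.1.contDiffAt (Ioi_mem_nhds ht)).differentiableAt one_ne_zero).hasDerivAt.div
      (hasDerivAt_id t) (ne_of_gt ht)
  refine strictMonoOn_of_deriv_pos (convex_Ioi 0)
    (fun t ht => (hderiv t ht).continuousAt.continuousWithinAt) fun t ht => ?_
  have ht : 0 < t := interior_subset ht
  have hlt := (div_lt_iff₀ ht).1 (hg.2.2.2.1 t ht).1
  rw [(hderiv t ht).deriv]
  exact div_pos (by linarith) (by positivity)

end CondG

theorem stmt_2 (n : ℕ) (hn : 5 ≤ n) (g : ℝ → ℝ) (hg : CondG n g)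
    (A B : ℝ) (hA : A = ((n : ℝ) * ((n : ℝ) - 4) + 8) / 2)
    (hB : B = (n : ℝ) ^ 2 * ((n : ℝ) - 4) ^ 2 / 16)
    (a₀ : ℝ) (ha₀ : 0 < a₀) (hga₀ : g a₀ = B * a₀)
    (a : ℝ) (ha : 0 < a) (haa₀ : a < a₀) :
    ∃ (v : ℝ → ℝ) (L : ℝ), 0 < L ∧ ContDiff ℝ 4 v ∧ (∀ t, 0 < v t) ∧ IsSol A B g v ∧
      (∀ t, v (t + L) = v t) ∧ (∀ t, v (-t) = v t) ∧ (∀ t, v t ≤ v 0) ∧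
      (∀ t, a ≤ v t) ∧ v (L / 2) = a ∧ StrictAntiOn v (Set.Icc 0 (L / 2)) ∧
      (⨅ t : ℝ, v t) = a ∧ ∃ M : ℝ, ∀ t, v t ≤ M := by
  have hn4 : 0 < (n : ℝ) - 4 := by
    have : (5 : ℝ) ≤ n := mod_cast hn
    linarith
  have hAB : 4 * B ≤ A ^ 2 := by
    rw [hA, hB]
    nlinarith [sq_nonneg ((n : ℝ) - 2)]
  exact stmt_2_general hg.locallyLipschitzOn hg.2.1 hg.strictMonoOn_div_self
    (by rw [hA]; positivity) (by rw [hB]; positivity) hAB hga₀ ha haa₀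
end
end
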